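/- Let d be a symmetric design with c_{d22} > 0, let λ0 ∈ ℝ, and let τ0 ∈ ℝ^t with 1_t′τ0 = 0 and τ0 ≠ 0. Then the Fisher information matrix C_{d,τ0,λ0} satisfies: C_{d,τ0,λ0} 1_t = 0; C_{d,τ0,λ0} τ0 = (t−1)⁻¹ (c_{d11} − c_{d12}²/c_{d22}) τ0; and C_{d,τ0,λ0} x = (t−1)⁻¹ (c_{d11} + 2 λ0 c_{d12} + λ0² c_{d22}) x for every x ∈ ℝ^t with 1_t′x = 0 and τ0′x = 0. In particular, regardless of the value of τ0, the eigenvalues of C_{d,τ0,λ0} are 0, (t−1)⁻¹(c_{d11} − c_{d12}²/c_{d22}) and (t−1)⁻¹(c_{d11} + 2λ0 c_{d12} + λ0² c_{d22}) with multiplicities 1, 1 and t−2, respectively. -/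

import Mathlib

open Matrix MeasureTheory
open scoped Classical

noncomputable section

/-- A treatment sequence: assigns a treatment in `Fin t` to each period in `Fin p`. -/
abbrev TrtSeq (p t : ℕ) := Fin p → Fin t

/-- Treatment/period incidence matrix `T_s`. -/
def Tmat {p t : ℕ} (s : TrtSeq p t) : Matrix (Fin p) (Fin t) ℝ :=
  Matrix.of fun k i => if s k = i then 1 else 0

/-- Carryover incidence matrix `F_s`: first row zero, row `k` records the treatment
in period `k-1`. -/
def Fmat {p t : ℕ} (s : TrtSeq p t) : Matrix (Fin p) (Fin t) ℝ :=
  Matrix.of fun k i =>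
    if (k : ℕ) = 0 then 0
    else if s ⟨(k : ℕ) - 1, Nat.lt_of_le_of_lt (Nat.sub_le _ _) k.isLt⟩ = i then 1 else 0

/-- The all-ones `m × m` matrix `J_m`. -/
def Jmat (m : ℕ) : Matrix (Fin m) (Fin m) ℝ := Matrix.of fun _ _ => 1

/-- `B_t = I_t - J_t / t`. -/
def Bmat (t : ℕ) : Matrix (Fin t) (Fin t) ℝ := 1 - ((t : ℝ))⁻¹ • Jmat t

/-- `B̃ = Σ⁻¹ - Σ⁻¹ J_p Σ⁻¹ / (1_p' Σ⁻¹ 1_p)`. -/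
def Btil {p : ℕ} (S : Matrix (Fin p) (Fin p) ℝ) : Matrix (Fin p) (Fin p) ℝ :=
  S⁻¹ - (((fun _ => (1 : ℝ)) : Fin p → ℝ) ⬝ᵥ (S⁻¹ *ᵥ fun _ => (1 : ℝ)))⁻¹ •
    (S⁻¹ * Jmat p * S⁻¹)

/-- `G_1(s) = T_s`, `G_2(s) = F_s`. -/
def Gmat {p t : ℕ} (i : Fin 2) (s : TrtSeq p t) : Matrix (Fin p) (Fin t) ℝ :=
  if i = 0 then Tmat s else Fmat s

/-- An approximate design: nonnegative weights summing to one. -/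
def IsDesign {p t : ℕ} (w : TrtSeq p t → ℝ) : Prop :=
  (∀ s, 0 ≤ w s) ∧ ∑ s : TrtSeq p t, w s = 1

/-- `Ĉ_{sij} = B_t G_i(s)' B̃ G_j(s) B_t`. -/
def Chat {p t : ℕ} (S : Matrix (Fin p) (Fin p) ℝ) (s : TrtSeq p t) (i j : Fin 2) :
    Matrix (Fin t) (Fin t) ℝ :=
  Bmat t * (Gmat i s)ᵀ * Btil S * Gmat j s * Bmat t

/-- `c_{sij} = tr Ĉ_{sij}`. -/
def cseq {p t : ℕ} (S : Matrix (Fin p) (Fin p) ℝ) (s : TrtSeq p t) (i j : Fin 2) : ℝ :=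
  (Chat S s i j).trace

/-- `Ĉ_{dij} = n ∑_s p_s Ĉ_{sij}`. -/
def ChatD {p t : ℕ} (n : ℕ) (S : Matrix (Fin p) (Fin p) ℝ) (w : TrtSeq p t → ℝ)
    (i j : Fin 2) : Matrix (Fin t) (Fin t) ℝ :=
  (n : ℝ) • ∑ s : TrtSeq p t, w s • Chat S s i j

/-- `C_{dij} = Ĉ_{dij} - n (∑_s p_s G_i(s) B_t)' B̃ (∑_s p_s G_j(s) B_t)`. -/
def CD {p t : ℕ} (n : ℕ) (S : Matrix (Fin p) (Fin p) ℝ) (w : TrtSeq p t → ℝ)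
    (i j : Fin 2) : Matrix (Fin t) (Fin t) ℝ :=
  ChatD n S w i j -
    (n : ℝ) • ((∑ s : TrtSeq p t, w s • (Gmat i s * Bmat t))ᵀ * Btil S *
      (∑ s : TrtSeq p t, w s • (Gmat j s * Bmat t)))

/-- `c_{dij} = tr Ĉ_{dij} = n ∑_s p_s c_{sij}`. -/
def cD {p t : ℕ} (n : ℕ) (S : Matrix (Fin p) (Fin p) ℝ) (w : TrtSeq p t → ℝ)
    (i j : Fin 2) : ℝ :=
  (ChatD n S w i j).trace

/-- Fisher information matrix `C_{d,τ0,λ0}` for the direct treatment effects under the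
proportional model. -/
def CInfo {p t : ℕ} (n : ℕ) (S : Matrix (Fin p) (Fin p) ℝ) (w : TrtSeq p t → ℝ)
    (τ0 : Fin t → ℝ) (l0 : ℝ) : Matrix (Fin t) (Fin t) ℝ :=
  CD n S w 0 0 + l0 • (CD n S w 0 1 + CD n S w 1 0) + (l0 ^ 2) • CD n S w 1 1 -
    (τ0 ⬝ᵥ (CD n S w 1 1 *ᵥ τ0))⁻¹ •
      ((CD n S w 0 1 + l0 • CD n S w 1 1) * vecMulVec τ0 τ0 *
        (CD n S w 1 0 + l0 • CD n S w 1 1))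

/-- Permutation matrix `S_σ` with `(S_σ)_{j,i} = 1` iff `i = σ j`. -/
def Smat {t : ℕ} (σ : Equiv.Perm (Fin t)) : Matrix (Fin t) (Fin t) ℝ :=
  Matrix.of fun j i => if i = σ j then 1 else 0

/-- The relabelled sequence `σ ∘ s`. -/
def permSeq {p t : ℕ} (σ : Equiv.Perm (Fin t)) (s : TrtSeq p t) : TrtSeq p t := fun k => σ (s k)

/-- The design `σ d`, with weights `(σd)_s = p_{σ⁻¹ ∘ s}`. -/
def permDesign {p t : ℕ} (σ : Equiv.Perm (Fin t)) (w : TrtSeq p t → ℝ) : TrtSeq p t → ℝ :=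
  fun s => w (permSeq σ⁻¹ s)

/-- A design is symmetric if its weights are invariant under treatment relabelling. -/
def IsSymmetricDesign {p t : ℕ} (w : TrtSeq p t → ℝ) : Prop :=
  ∀ (σ : Equiv.Perm (Fin t)) (s : TrtSeq p t), w (permSeq σ s) = w s

/-- The symmetrized design `d*` with weights `p*_s = (1/t!) ∑_σ p_{σ⁻¹ ∘ s}`. -/
def symmetrize {p t : ℕ} (w : TrtSeq p t → ℝ) : TrtSeq p t → ℝ :=
  fun s => ((Nat.factorial t : ℝ))⁻¹ * ∑ σ : Equiv.Perm (Fin t), permDesign σ w s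

/-- `q_s(x) = c_{s11} + 2 c_{s12} x + c_{s22} x²`. -/
def qSeq {p t : ℕ} (S : Matrix (Fin p) (Fin p) ℝ) (s : TrtSeq p t) (x : ℝ) : ℝ :=
  cseq S s 0 0 + 2 * cseq S s 0 1 * x + cseq S s 1 1 * x ^ 2

/-- `q(x) = max_{s ∈ S} q_s(x)`. -/
def qMax (p t : ℕ) (S : Matrix (Fin p) (Fin p) ℝ) (x : ℝ) : ℝ :=
  sSup (Set.range fun s : TrtSeq p t => qSeq S s x)

/-- `y* = inf_x q(x)`. -/
def yStar (p t : ℕ) (S : Matrix (Fin p) (Fin p) ℝ) : ℝ := ⨅ x : ℝ, qMax p t S x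

/-- `q_d(x) = ∑_s p_s q_s(x)`. -/
def qD {p t : ℕ} (S : Matrix (Fin p) (Fin p) ℝ) (w : TrtSeq p t → ℝ) (x : ℝ) : ℝ :=
  ∑ s : TrtSeq p t, w s * qSeq S s x

/-- `x_d = -c_{d12}/c_{d22}`. -/
def xD {p t : ℕ} (n : ℕ) (S : Matrix (Fin p) (Fin p) ℝ) (w : TrtSeq p t → ℝ) : ℝ :=
  -(cD n S w 0 1) / cD n S w 1 1

/-- An exchangeable prior: a probability measure on `{τ : 1'τ = 0, τ ≠ 0}` that is
invariant under all coordinate permutations of `ℝ^t`. -/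
def IsExchangeablePrior {t : ℕ} (g : Measure (Fin t → ℝ)) : Prop :=
  IsProbabilityMeasure g ∧
    g {τ : Fin t → ℝ | ¬((∑ i, τ i) = 0 ∧ τ ≠ 0)} = 0 ∧
    ∀ σ : Equiv.Perm (Fin t), Measure.map (fun τ i => τ (σ i)) g = g

/-- `m_d(τ0) = min {ℓ' C_{d,τ0,λ0} ℓ : 1'ℓ = 0, ℓ'ℓ = 1}`. -/
def mD {p t : ℕ} (n : ℕ) (S : Matrix (Fin p) (Fin p) ℝ) (w : TrtSeq p t → ℝ) (l0 : ℝ)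
    (τ0 : Fin t → ℝ) : ℝ :=
  sInf {v : ℝ | ∃ l : Fin t → ℝ, (∑ i, l i) = 0 ∧ l ⬝ᵥ l = 1 ∧
    v = l ⬝ᵥ (CInfo n S w τ0 l0 *ᵥ l)}

/-- The E-criterion value `E_{g,λ0}(d) = ∫ m_d(τ0) g(dτ0)`. -/
def Ecrit {p t : ℕ} (n : ℕ) (S : Matrix (Fin p) (Fin p) ℝ) (g : Measure (Fin t → ℝ))
    (l0 : ℝ) (w : TrtSeq p t → ℝ) : ℝ :=
  ∫ τ0, mD n S w l0 τ0 ∂g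

/-- Competing designs for E-optimality: designs with a.e. positive `τ0' C_{d22} τ0`
and `g`-integrable `m_d`. -/
def EAdmissible {p t : ℕ} (n : ℕ) (S : Matrix (Fin p) (Fin p) ℝ) (g : Measure (Fin t → ℝ))
    (l0 : ℝ) (w : TrtSeq p t → ℝ) : Prop :=
  IsDesign w ∧ (∀ᵐ τ0 ∂g, 0 < τ0 ⬝ᵥ (CD n S w 1 1 *ᵥ τ0)) ∧
    Integrable (mD n S w l0) g

/-- `d` is `E_{g,λ0}`-optimal. -/
def EOptimal {p t : ℕ} (n : ℕ) (S : Matrix (Fin p) (Fin p) ℝ) (g : Measure (Fin t → ℝ))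
    (l0 : ℝ) (w : TrtSeq p t → ℝ) : Prop :=
  ∀ w' : TrtSeq p t → ℝ, EAdmissible n S g l0 w' → Ecrit n S g l0 w' ≤ Ecrit n S g l0 w

/-- A pseudo symmetric design: treatments equireplicated in each period,
and all `C_{dij}` completely symmetric. -/
def IsPseudoSymmetric {p t : ℕ} (n : ℕ) (S : Matrix (Fin p) (Fin p) ℝ)
    (w : TrtSeq p t → ℝ) : Prop :=
  (∀ (k : Fin p) (i : Fin t),
    (∑ s ∈ Finset.univ.filter fun s : TrtSeq p t => s k = i, w s) = 1 / (t : ℝ)) ∧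
  ∀ i j : Fin 2, ∃ a b : ℝ, CD n S w i j = a • (1 : Matrix (Fin t) (Fin t) ℝ) + b • Jmat t

/-- Eigenvalues of a (Hermitian) matrix sorted increasingly with multiplicity. -/
def sortedEigs {t : ℕ} (C : Matrix (Fin t) (Fin t) ℝ) : Fin t → ℝ :=
  if h : C.IsHermitian then (fun i => h.eigenvalues (Tuple.sort h.eigenvalues i))
  else fun _ => 0

/-- `Φ_D(C) = (∏_{i=1}^{t-1} a_i)^{1/(t-1)}` (eigenvalues sorted increasingly). -/
def PhiD {t : ℕ} (C : Matrix (Fin t) (Fin t) ℝ) : ℝ :=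
  (∏ i ∈ Finset.univ.filter fun i : Fin t => (i : ℕ) ≠ 0, sortedEigs C i) ^ (((t : ℝ) - 1)⁻¹)

/-- `Φ_A(C) = (t-1)(∑_{i=1}^{t-1} a_i⁻¹)⁻¹` if `a_1 > 0`, else `0`. -/
def PhiA {t : ℕ} (C : Matrix (Fin t) (Fin t) ℝ) : ℝ :=
  if ∀ i : Fin t, (i : ℕ) ≠ 0 → 0 < sortedEigs C i then
    ((t : ℝ) - 1) *
      (∑ i ∈ Finset.univ.filter fun i : Fin t => (i : ℕ) ≠ 0, (sortedEigs C i)⁻¹)⁻¹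
  else 0

/-- `Φ_T(C) = tr(C)/(t-1)`. -/
def PhiT {t : ℕ} (C : Matrix (Fin t) (Fin t) ℝ) : ℝ := C.trace / ((t : ℝ) - 1)

/-- The criterion value `∫ Φ(C_{d,τ0,λ0}) g(dτ0)`. -/
def PhiCrit {p t : ℕ} (n : ℕ) (S : Matrix (Fin p) (Fin p) ℝ)
    (Phi : Matrix (Fin t) (Fin t) ℝ → ℝ) (g : Measure (Fin t → ℝ)) (l0 : ℝ)
    (w : TrtSeq p t → ℝ) : ℝ :=
  ∫ τ0, Phi (CInfo n S w τ0 l0) ∂g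

/-- Competing designs for a `Φ`-criterion. -/
def PhiAdmissible {p t : ℕ} (n : ℕ) (S : Matrix (Fin p) (Fin p) ℝ)
    (Phi : Matrix (Fin t) (Fin t) ℝ → ℝ) (g : Measure (Fin t → ℝ)) (l0 : ℝ)
    (w : TrtSeq p t → ℝ) : Prop :=
  IsDesign w ∧ (∀ᵐ τ0 ∂g, 0 < τ0 ⬝ᵥ (CD n S w 1 1 *ᵥ τ0)) ∧
    Integrable (fun τ0 => Phi (CInfo n S w τ0 l0)) g

/-- `d` is `Φ_{g,λ0}`-optimal. -/
def PhiOptimal {p t : ℕ} (n : ℕ) (S : Matrix (Fin p) (Fin p) ℝ)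
    (Phi : Matrix (Fin t) (Fin t) ℝ → ℝ) (g : Measure (Fin t → ℝ)) (l0 : ℝ)
    (w : TrtSeq p t → ℝ) : Prop :=
  ∀ w' : TrtSeq p t → ℝ, PhiAdmissible n S Phi g l0 w' →
    PhiCrit n S Phi g l0 w' ≤ PhiCrit n S Phi g l0 w

/-- `H_1(s) = F_s`, `H_2(s) = T_s + λ0 F_s` (for estimating `λ`). -/
def Hmat {p t : ℕ} (l0 : ℝ) (i : Fin 2) (s : TrtSeq p t) : Matrix (Fin p) (Fin t) ℝ :=
  if i = 0 then Fmat s else Tmat s + l0 • Fmat s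

/-- `Â_{sij} = B_t H_i(s)' B̃ H_j(s) B_t`. -/
def Ahat {p t : ℕ} (S : Matrix (Fin p) (Fin p) ℝ) (l0 : ℝ) (s : TrtSeq p t) (i j : Fin 2) :
    Matrix (Fin t) (Fin t) ℝ :=
  Bmat t * (Hmat l0 i s)ᵀ * Btil S * Hmat l0 j s * Bmat t

/-- `h_{sij} = tr Â_{sij}`. -/
def hseq {p t : ℕ} (S : Matrix (Fin p) (Fin p) ℝ) (l0 : ℝ) (s : TrtSeq p t) (i j : Fin 2) : ℝ :=
  (Ahat S l0 s i j).trace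

/-- `Â_{dij} = n ∑_s p_s Â_{sij}`. -/
def AhatD {p t : ℕ} (n : ℕ) (S : Matrix (Fin p) (Fin p) ℝ) (l0 : ℝ) (w : TrtSeq p t → ℝ)
    (i j : Fin 2) : Matrix (Fin t) (Fin t) ℝ :=
  (n : ℝ) • ∑ s : TrtSeq p t, w s • Ahat S l0 s i j

/-- `A_{dij} = Â_{dij} - n (∑_s p_s H_i(s) B_t)' B̃ (∑_s p_s H_j(s) B_t)`. -/
def AD {p t : ℕ} (n : ℕ) (S : Matrix (Fin p) (Fin p) ℝ) (l0 : ℝ) (w : TrtSeq p t → ℝ)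
    (i j : Fin 2) : Matrix (Fin t) (Fin t) ℝ :=
  AhatD n S l0 w i j -
    (n : ℝ) • ((∑ s : TrtSeq p t, w s • (Hmat l0 i s * Bmat t))ᵀ * Btil S *
      (∑ s : TrtSeq p t, w s • (Hmat l0 j s * Bmat t)))

/-- `G` is a generalized inverse of `A`. -/
def IsGInv {t : ℕ} (A G : Matrix (Fin t) (Fin t) ℝ) : Prop := A * G * A = A

/-- `A_d(G) = A_{d11} - A_{d12} G A_{d21}` with `A_{d21} = A_{d12}'`. -/
def ADfun {p t : ℕ} (n : ℕ) (S : Matrix (Fin p) (Fin p) ℝ) (l0 : ℝ) (w : TrtSeq p t → ℝ)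
    (G : Matrix (Fin t) (Fin t) ℝ) : Matrix (Fin t) (Fin t) ℝ :=
  AD n S l0 w 0 0 - AD n S l0 w 0 1 * G * (AD n S l0 w 0 1)ᵀ

/-- `r_s(x) = h_{s11} + 2 h_{s12} x + h_{s22} x²`. -/
def rSeq {p t : ℕ} (S : Matrix (Fin p) (Fin p) ℝ) (l0 : ℝ) (s : TrtSeq p t) (x : ℝ) : ℝ :=
  hseq S l0 s 0 0 + 2 * hseq S l0 s 0 1 * x + hseq S l0 s 1 1 * x ^ 2

/-- `r(x) = max_s r_s(x)`. -/
def rMax (p t : ℕ) (S : Matrix (Fin p) (Fin p) ℝ) (l0 : ℝ) (x : ℝ) : ℝ :=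
  sSup (Set.range fun s : TrtSeq p t => rSeq S l0 s x)

/-- `y_0 = inf_x r(x)`. -/
def yZero (p t : ℕ) (S : Matrix (Fin p) (Fin p) ℝ) (l0 : ℝ) : ℝ := ⨅ x : ℝ, rMax p t S l0 x

lemma Gmat_perm {p t : ℕ} (i : Fin 2) (σ : Equiv.Perm (Fin t)) (s : TrtSeq p t)
    (k : Fin p) (a : Fin t) : Gmat i (permSeq σ s) k (σ a) = Gmat i s k a := by
  unfold Gmat
  split_ifs <;> simp [Tmat, Fmat, permSeq]

lemma sum_permSeq {p t : ℕ} (σ : Equiv.Perm (Fin t)) (f : TrtSeq p t → ℝ) :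
    ∑ s, f (permSeq σ s) = ∑ s, f s := by
  have h := Equiv.sum_comp (Equiv.arrowCongr (Equiv.refl (Fin p)) σ) f
  rw [← h]
  rfl

lemma Jmat_mul_Bmat {t : ℕ} (ht : 3 ≤ t) : Jmat t * Bmat t = 0 := by
  have h0 : (t : ℝ) ≠ 0 := by positivity
  ext a b
  simp [Jmat, Bmat, Matrix.mul_apply, Matrix.one_apply, Finset.sum_sub_distrib, h0]

lemma Bmat_transpose (t : ℕ) : (Bmat t)ᵀ = Bmat t := by
  ext a b
  simp [Bmat, Jmat, Matrix.one_apply, eq_comm]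

lemma Jmat_transpose (t : ℕ) : (Jmat t)ᵀ = Jmat t := by
  ext a b
  simp [Jmat]

lemma Bmat_mul_Bmat {t : ℕ} (ht : 3 ≤ t) : Bmat t * Bmat t = Bmat t := by
  nth_rewrite 1 [Bmat]
  rw [Matrix.sub_mul, Matrix.smul_mul, Jmat_mul_Bmat ht]
  simp

lemma Bmat_trace {t : ℕ} (ht : 3 ≤ t) : (Bmat t).trace = (t : ℝ) - 1 := by
  have h0 : (t : ℝ) ≠ 0 := by positivity
  simp [Bmat, Jmat, Matrix.trace, Matrix.diag, h0]

lemma Bmat_mulVec {t : ℕ} (x : Fin t → ℝ) (hx : ∑ i, x i = 0) : Bmat t *ᵥ x = x := by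
  have : Jmat t *ᵥ x = 0 := by
    ext i
    simp [Jmat, Matrix.mulVec, dotProduct, hx]
  simp [Bmat, Matrix.sub_mulVec, Matrix.smul_mulVec, this]

lemma Bmat_mulVec_one {t : ℕ} (ht : 3 ≤ t) : Bmat t *ᵥ (fun _ => (1 : ℝ)) = 0 := by
  have h0 : (t : ℝ) ≠ 0 := by positivity
  ext i
  simp [Bmat, Jmat, Matrix.mulVec, dotProduct, Matrix.one_apply, h0]

lemma exists_perm {t : ℕ} (a0 a1 a b : Fin t) (h0 : a0 ≠ a1) (h : a ≠ b) :
    ∃ σ : Equiv.Perm (Fin t), σ a0 = a ∧ σ a1 = b := by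
  have h1 : Equiv.swap a0 a a1 ≠ a := by
    intro h'
    apply h0
    apply (Equiv.swap a0 a).injective
    rw [h', Equiv.swap_apply_left]
  refine ⟨(Equiv.swap a0 a).trans (Equiv.swap (Equiv.swap a0 a a1) b), ?_, ?_⟩
  · simp [Equiv.swap_apply_of_ne_of_ne h1.symm h]
  · simp

lemma invariant_form {t : ℕ} (ht : 3 ≤ t) (N : Matrix (Fin t) (Fin t) ℝ)
    (hN : ∀ (σ : Equiv.Perm (Fin t)) a b, N (σ a) (σ b) = N a b) :
    ∃ α β : ℝ, N = α • (1 : Matrix (Fin t) (Fin t) ℝ) + β • Jmat t := by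
  let a0 : Fin t := ⟨0, by omega⟩
  let a1 : Fin t := ⟨1, by omega⟩
  have h01 : a0 ≠ a1 := by simp [a0, a1]
  refine ⟨N a0 a0 - N a0 a1, N a0 a1, ?_⟩
  ext a b
  by_cases h : a = b
  · subst h
    have := hN (Equiv.swap a0 a) a0 a0
    simp only [Equiv.swap_apply_left] at this
    simp [Jmat, this]
  · obtain ⟨σ, rfl, rfl⟩ := exists_perm a0 a1 a b h01 h
    rw [hN]
    simp [Jmat, Matrix.one_apply, h01]

lemma sum_G_mul_B {p t : ℕ} (ht : 3 ≤ t) (w : TrtSeq p t → ℝ) (hsym : IsSymmetricDesign w)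
    (i : Fin 2) : ∑ s : TrtSeq p t, w s • (Gmat i s * Bmat t) = 0 := by
  have e : ∑ s : TrtSeq p t, w s • (Gmat i s * Bmat t)
      = (∑ s : TrtSeq p t, w s • Gmat i s) * Bmat t := by
    rw [Matrix.sum_mul]
    simp
  rw [e]
  set M := ∑ s : TrtSeq p t, w s • Gmat i s with hM
  have hinv : ∀ (σ : Equiv.Perm (Fin t)) k a, M k (σ a) = M k a := by
    intro σ k a
    simp only [hM, Matrix.sum_apply, Matrix.smul_apply, smul_eq_mul]
    rw [← sum_permSeq σ]
    simp only [Gmat_perm, hsym σ]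
  have h0 : (t : ℝ) ≠ 0 := by positivity
  ext k b
  have hc : ∀ a, M k a = M k b := by
    intro a
    have := hinv (Equiv.swap b a) k b
    simpa using this
  have hJ : (Jmat t * Bmat t) b b = 0 := by rw [Jmat_mul_Bmat ht]; rfl
  simp only [Matrix.mul_apply, Jmat, Matrix.of_apply, one_mul] at hJ
  simp only [Matrix.mul_apply, hc, ← Finset.mul_sum, hJ]
  simp

lemma ChatD_form {p t : ℕ} (n : ℕ) (ht : 3 ≤ t) (S : Matrix (Fin p) (Fin p) ℝ)
    (w : TrtSeq p t → ℝ) (hsym : IsSymmetricDesign w) (i j : Fin 2) :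
    ChatD n S w i j = (((t : ℝ) - 1)⁻¹ * cD n S w i j) • Bmat t := by
  set N : Matrix (Fin t) (Fin t) ℝ :=
    ∑ s : TrtSeq p t, w s • ((Gmat i s)ᵀ * Btil S * Gmat j s) with hNdef
  have e : ChatD n S w i j = (n : ℝ) • (Bmat t * N * Bmat t) := by
    rw [ChatD, hNdef, Finset.mul_sum, Finset.sum_mul]
    congr 1
    refine Finset.sum_congr rfl fun s _ => ?_
    simp [Chat, Matrix.mul_assoc]
  have hinv : ∀ (σ : Equiv.Perm (Fin t)) a b, N (σ a) (σ b) = N a b := by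
    intro σ a b
    simp only [hNdef, Matrix.sum_apply, Matrix.smul_apply, smul_eq_mul]
    rw [← sum_permSeq σ]
    simp only [Matrix.mul_apply, Matrix.transpose_apply, Gmat_perm, hsym σ]
  obtain ⟨α, β, hN⟩ := invariant_form ht N hinv
  have e2 : ChatD n S w i j = ((n : ℝ) * α) • Bmat t := by
    rw [e, hN, Matrix.mul_add, Matrix.add_mul, Matrix.mul_assoc _ (β • Jmat t), Matrix.smul_mul β,
      Jmat_mul_Bmat ht]
    simp [Bmat_mul_Bmat ht, smul_smul]
  have h1 : (t : ℝ) - 1 ≠ 0 := by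
    have : (3 : ℝ) ≤ t := by exact_mod_cast ht
    linarith
  have e3 : cD n S w i j = (n : ℝ) * α * ((t : ℝ) - 1) := by
    rw [cD, e2, Matrix.trace_smul, Bmat_trace ht, smul_eq_mul]
  rw [e2, e3]
  congr 1
  field_simp

lemma CD_form {p t : ℕ} (n : ℕ) (ht : 3 ≤ t) (S : Matrix (Fin p) (Fin p) ℝ)
    (w : TrtSeq p t → ℝ) (hsym : IsSymmetricDesign w) (i j : Fin 2) :
    CD n S w i j = (((t : ℝ) - 1)⁻¹ * cD n S w i j) • Bmat t := by
  rw [CD, sum_G_mul_B ht w hsym, ChatD_form n ht S w hsym]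
  simp

lemma Btil_transpose {p : ℕ} (S : Matrix (Fin p) (Fin p) ℝ) (hS : Sᵀ = S) :
    (Btil S)ᵀ = Btil S := by
  simp [Btil, Matrix.transpose_nonsing_inv, hS, Jmat_transpose, Matrix.mul_assoc]

lemma cD_symm {p t : ℕ} (n : ℕ) (S : Matrix (Fin p) (Fin p) ℝ) (hS : Sᵀ = S)
    (w : TrtSeq p t → ℝ) : cD n S w 1 0 = cD n S w 0 1 := by
  rw [cD, cD, ← Matrix.trace_transpose]
  congr 1
  simp [ChatD, Chat, Matrix.transpose_sum, Bmat_transpose, Btil_transpose S hS, Matrix.mul_assoc]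

/-- eigenstructure of the Fisher information matrix of a symmetric design. -/
theorem stmt5 (p t n : ℕ) (hp : 2 ≤ p) (ht : 3 ≤ t) (hn : 1 ≤ n)
    (S : Matrix (Fin p) (Fin p) ℝ) (hS : S.PosDef)
    (w : TrtSeq p t → ℝ) (hw : IsDesign w) (hsym : IsSymmetricDesign w)
    (hc22 : 0 < cD n S w 1 1) (l0 : ℝ)
    (τ0 : Fin t → ℝ) (hτsum : (∑ i, τ0 i) = 0) (hτ0 : τ0 ≠ 0) :
    (CInfo n S w τ0 l0 *ᵥ fun _ => (1 : ℝ)) = 0 ∧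
    CInfo n S w τ0 l0 *ᵥ τ0 =
      (((t : ℝ) - 1)⁻¹ * (cD n S w 0 0 - (cD n S w 0 1) ^ 2 / cD n S w 1 1)) • τ0 ∧
    ∀ x : Fin t → ℝ, (∑ i, x i) = 0 → τ0 ⬝ᵥ x = 0 →
      CInfo n S w τ0 l0 *ᵥ x =
        (((t : ℝ) - 1)⁻¹ *
          (cD n S w 0 0 + 2 * l0 * cD n S w 0 1 + l0 ^ 2 * cD n S w 1 1)) • x := by
  have hSt : Sᵀ = S := by
    have := hS.isHermitian
    simpa [Matrix.IsHermitian, Matrix.conjTranspose_eq_transpose_of_trivial] using this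
  have h1 : (t : ℝ) - 1 ≠ 0 := by
    have : (3 : ℝ) ≤ t := by exact_mod_cast ht
    linarith
  have hτB : Bmat t *ᵥ τ0 = τ0 := Bmat_mulVec τ0 hτsum
  have hBτ : τ0 ᵥ* Bmat t = τ0 := by
    rw [← Matrix.mulVec_transpose, Bmat_transpose, hτB]
  have hN : τ0 ⬝ᵥ τ0 ≠ 0 := by
    simpa using hτ0
  have key : ∀ x : Fin t → ℝ, CInfo n S w τ0 l0 *ᵥ x =
      (((t : ℝ) - 1)⁻¹ *
          (cD n S w 0 0 + 2 * l0 * cD n S w 0 1 + l0 ^ 2 * cD n S w 1 1)) • (Bmat t *ᵥ x) -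
      (((t : ℝ) - 1)⁻¹ * (cD n S w 0 1 + l0 * cD n S w 1 1) ^ 2 / cD n S w 1 1 *
        ((τ0 ⬝ᵥ x) / (τ0 ⬝ᵥ τ0))) • τ0 := by
    intro x
    have hx : (Bmat t * vecMulVec τ0 τ0 * Bmat t) = vecMulVec τ0 τ0 := by
      rw [Matrix.mul_vecMulVec, Matrix.vecMulVec_mul, hτB, hBτ]
    have hv : vecMulVec τ0 τ0 *ᵥ x = (τ0 ⬝ᵥ x) • τ0 := by
      ext k
      simp [Matrix.vecMulVec_mulVec, mul_comm]
    rw [CInfo]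
    simp only [CD_form n ht S w hsym, cD_symm n S hSt w, smul_smul, ← add_smul, Matrix.smul_mul,
      Matrix.mul_smul, hx, Matrix.sub_mulVec, Matrix.smul_mulVec, hv, hτB, dotProduct_smul]
    congr 1
    · congr 1
      ring
    · congr 1
      have := hc22.ne'
      simp only [smul_eq_mul]
      field_simp
  refine ⟨?_, ?_, ?_⟩
  · rw [key, Bmat_mulVec_one ht]
    have : (τ0 ⬝ᵥ fun _ => (1 : ℝ)) = 0 := by simpa [dotProduct] using hτsum
    simp [this]
  · rw [key, hτB, ← sub_smul]
    congr 1
    have := hc22.ne'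
    field_simp
    ring
  · intro x hx hτx
    rw [key, hτx, Bmat_mulVec x hx]
    simp
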